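/- Let V₁ be a completely nonunitary C₀-semigroup of isometries on a complex Hilbert space H commuting with a unitary C₀-semigroup V₂ on H. Then there exist a Hilbert space F, a unitary C₀-semigroup U = (U_t)_{t≥0} on F, and a unitary Z : H → L²(ℝ₊, F) such that for all t ≥ 0, Z V_{1,t} Z* = S_t^F and (Z V_{2,t} Z* f)(x) = U_t(f(x)) for a.e. x (i.e., Z V_{2,t} Z* = I ⊗ U_t). -/

import Mathlib

open MeasureTheory ContinuousLinearMap
open scoped ENNReal NNReal InnerProductSpace ComplexInnerProductSpace

noncomputable section

section SemigroupDefs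

variable {G : Type} [NormedAddCommGroup G] [InnerProductSpace ℂ G] [CompleteSpace G]

/-- A (C₀-) strongly continuous one-parameter semigroup of bounded operators. -/
def IsC0Semigroup (V : ℝ≥0 → G →L[ℂ] G) : Prop :=
  V 0 = 1 ∧ (∀ s t : ℝ≥0, V (s + t) = V s ∘L V t) ∧ ∀ x : G, Continuous fun t : ℝ≥0 => V t x

/-- A C₀-semigroup of isometries. -/
def IsIsometrySemigroup (V : ℝ≥0 → G →L[ℂ] G) : Prop :=
  IsC0Semigroup V ∧ ∀ (t : ℝ≥0) (x : G), ‖V t x‖ = ‖x‖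

/-- The closed subspace `L` reduces the semigroup `V`: it is invariant under every `V t`
and every `(V t)*`. -/
def ReducedBy (V : ℝ≥0 → G →L[ℂ] G) (L : Submodule ℂ G) : Prop :=
  (∀ t : ℝ≥0, ∀ x ∈ L, V t x ∈ L) ∧ ∀ t : ℝ≥0, ∀ x ∈ L, adjoint (V t) x ∈ L

/-- `T` restricts to a unitary operator on the subspace `L`. -/
def RestrictsToUnitaryOn (T : G →L[ℂ] G) (L : Submodule ℂ G) : Prop :=
  (∀ x ∈ L, T x ∈ L) ∧ (∀ x ∈ L, ‖T x‖ = ‖x‖) ∧ ∀ y ∈ L, ∃ x ∈ L, T x = y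

/-- Every `V t` restricts to a unitary operator on the subspace `L`. -/
def IsUnitarySemigroupOn (V : ℝ≥0 → G →L[ℂ] G) (L : Submodule ℂ G) : Prop :=
  ∀ t : ℝ≥0, RestrictsToUnitaryOn (V t) L

/-- A unitary C₀-semigroup: every `V t` is a surjective isometry. -/
def IsUnitarySemigroup (V : ℝ≥0 → G →L[ℂ] G) : Prop :=
  IsC0Semigroup V ∧ ∀ t : ℝ≥0, (∀ x : G, ‖V t x‖ = ‖x‖) ∧ Function.Surjective (V t)

/-- `V` is completely nonunitary on the subspace `K`: there is no nonzero closed subspace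
of `K` reducing `V` on which every `V t` restricts to a unitary. -/
def IsCnuOn (V : ℝ≥0 → G →L[ℂ] G) (K : Submodule ℂ G) : Prop :=
  ∀ L : Submodule ℂ G, IsClosed (L : Set G) → L ≤ K → ReducedBy V L →
    IsUnitarySemigroupOn V L → L = ⊥

/-- A completely nonunitary semigroup. -/
def IsCnu (V : ℝ≥0 → G →L[ℂ] G) : Prop := IsCnuOn V ⊤

/-- Two semigroups commute. -/
def SgCommute (V1 V2 : ℝ≥0 → G →L[ℂ] G) : Prop :=
  ∀ t s : ℝ≥0, V1 t ∘L V2 s = V2 s ∘L V1 t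

/-- Two semigroups doubly commute. -/
def SgDoublyCommute (V1 V2 : ℝ≥0 → G →L[ℂ] G) : Prop :=
  SgCommute V1 V2 ∧ ∀ t s : ℝ≥0, V1 t ∘L adjoint (V2 s) = adjoint (V2 s) ∘L V1 t

/-- A completely nonunitary pair of semigroups: no nonzero closed subspace reduces both
semigroups in such a way that both restrict to unitary semigroups. -/
def IsCnuPair (V1 V2 : ℝ≥0 → G →L[ℂ] G) : Prop :=
  ∀ L : Submodule ℂ G, IsClosed (L : Set G) → ReducedBy V1 L → ReducedBy V2 L →
    IsUnitarySemigroupOn V1 L → IsUnitarySemigroupOn V2 L → L = ⊥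

/-- A strongly continuous one-parameter unitary group. -/
def IsUnitaryGroup (U : ℝ → G →L[ℂ] G) : Prop :=
  U 0 = 1 ∧ (∀ s t : ℝ, U (s + t) = U s ∘L U t) ∧
  (∀ (t : ℝ) (x : G), ‖U t x‖ = ‖x‖) ∧ (∀ t : ℝ, Function.Surjective (U t)) ∧
  ∀ x : G, Continuous fun t : ℝ => U t x

/-- Two subspaces are mutually orthogonal. -/
def OrthoSubspaces (A B : Submodule ℂ G) : Prop :=
  ∀ x ∈ A, ∀ y ∈ B, ⟪x, y⟫_ℂ = 0

end SemigroupDefs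

/-- Lebesgue measure restricted to `ℝ₊ = [0, ∞)`; `Lp F 2 rplus` plays the role of
`L²(ℝ₊, F)`. -/
def rplus : Measure ℝ := (volume : Measure ℝ).restrict (Set.Ici 0)

/-- `T` is the right shift by `t` on `L²(ℝ₊, F)`:
`(T f)(x) = f (x - t)` for `x ≥ t` and `(T f)(x) = 0` otherwise. -/
def IsRightShiftOp (F : Type) [NormedAddCommGroup F] [InnerProductSpace ℂ F]
    (t : ℝ) (T : Lp F 2 rplus →L[ℂ] Lp F 2 rplus) : Prop :=
  ∀ f : Lp F 2 rplus,
    (T f : ℝ → F) =ᵐ[rplus] fun x => if t ≤ x then (f : ℝ → F) (x - t) else 0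

/-! The cogenerator `C = 1 - 2R`, with `R = ∫₀^∞ e⁻ᵘ T_u du`, of a semigroup of contractions
satisfies `d/ds ‖R T_s x‖² = (‖C T_s x‖² - ‖T_s x‖²) / 2`, so the semigroup is isometric iff `C`
is. The adjoint semigroup has cogenerator `C*`, and `C* ξ = 0` forces `(V_t)* ξ = e⁻ᵗ ξ` for all
`t`. Hence a semigroup of isometries whose deficiency space `F = {ξ | ∀ t, (V_t)* ξ = e⁻ᵗ ξ}` is
trivial has a unitary cogenerator and is itself unitary; in the completely nonunitary case the
orbits of `F` are therefore total. For `s ≥ t` they have Gram matrix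
`⟪V_s ξ, V_t η⟫ = e^{-(s - t)} ⟪ξ, η⟫`, which is also that of the right shifts of the functions
`√2 e⁻ˣ ξ`, so matching the two families gives `Z`. A unitary semigroup commuting with `V` also
commutes with its adjoint, hence reduces `F` and acts fibrewise in the model. -/

open Set Filter Topology

attribute [local instance] InnerProductSpace.complexToReal

section Calculus

variable {E : Type*} [NormedAddCommGroup E] [NormedSpace ℝ E]

lemma hasDerivAt_setIntegral_Ioi [CompleteSpace E] {f : ℝ → E} {b : ℝ} (hf : Continuous f)
    (hint : IntegrableOn f (Ioi b)) (s : ℝ) :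
    HasDerivAt (fun r => ∫ u in Ioi r, f u) (-f s) s := by
  have hsplit : (fun r => ∫ u in Ioi r, f u) =
      fun r => (∫ u in r..b, f u) + ∫ u in Ioi b, f u := by
    ext r
    rw [intervalIntegral.integral_interval_add_Ioi' (hf.intervalIntegrable r b) hint]
  rw [hsplit]
  exact (intervalIntegral.integral_hasDerivAt_left (hf.intervalIntegrable s b)
    (hf.stronglyMeasurableAtFilter _ _) hf.continuousAt).add_const _

lemma setIntegral_Ioi_comp_add_right (f : ℝ → E) (a s : ℝ) :
    ∫ u in Ioi a, f (u + s) = ∫ u in Ioi (a + s), f u := by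
  have := (measurePreserving_add_right volume s).setIntegral_preimage_emb
    (measurableEmbedding_addRight s) f (Ioi (a + s))
  rwa [preimage_add_const_Ioi, add_sub_cancel_right] at this

lemma eq_of_hasDerivWithinAt_zero {f : ℝ → E} {s : Set ℝ} (hs : Convex ℝ s)
    (hf : ∀ x ∈ s, HasDerivWithinAt f 0 s x) {x y : ℝ} (hx : x ∈ s) (hy : y ∈ s) : f x = f y := by
  have := hs.norm_image_sub_le_of_norm_hasDerivWithin_le (C := 0) hf (by simp) hy hx
  rwa [zero_mul, norm_le_zero_iff, sub_eq_zero] at this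

lemma ae_restrict_eq_zero_of_forall_setIntegral_Ioi_eq_zero [CompleteSpace E] {f : ℝ → E} {a : ℝ}
    (hf : IntegrableOn f (Ioi a)) (h : ∀ s, a ≤ s → ∫ x in Ioi s, f x = 0) :
    f =ᵐ[volume.restrict (Ioi a)] 0 := by
  have hprimitive : ∀ s, a ≤ s → ∫ x in a..s, (Ioi a).indicator f x = 0 := fun s hs => by
    rw [intervalIntegral.integral_of_le hs, setIntegral_indicator measurableSet_Ioi,
      inter_eq_left.2 Ioc_subset_Ioi_self, ← intervalIntegral.integral_of_le hs,
      ← intervalIntegral.integral_Ioi_sub_Ioi hf hs, h a le_rfl, h s hs, sub_zero]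
  rw [EventuallyEq, ae_restrict_iff' measurableSet_Ioi]
  filter_upwards [LocallyIntegrable.ae_hasDerivAt_integral
    (hf.integrable_indicator measurableSet_Ioi).locallyIntegrable] with x hx hax
  have hzero : (fun s => ∫ y in a..s, (Ioi a).indicator f y) =ᶠ[𝓝 x] fun _ => 0 := by
    filter_upwards [lt_mem_nhds hax] with s hs using hprimitive s hs.le
  simpa [indicator_of_mem hax] using
    (hx a).unique ((hasDerivAt_const x (0 : E)).congr_of_eventuallyEq hzero)

end Calculus

namespace IsC0Semigroup

variable {G : Type} [NormedAddCommGroup G] [InnerProductSpace ℂ G] {T : ℝ≥0 → G →L[ℂ] G}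

lemma zero_apply (hT : IsC0Semigroup T) (x : G) : T 0 x = x := by
  simp [hT.1]

lemma add_apply (hT : IsC0Semigroup T) (s t : ℝ≥0) (x : G) : T (s + t) x = T s (T t x) := by
  simp [hT.2.1]

end IsC0Semigroup

/-- A C₀-semigroup of contractions. Isometric semigroups and their adjoint semigroups are both of
this kind. -/
def IsContractionSemigroup {G : Type} [NormedAddCommGroup G] [InnerProductSpace ℂ G]
    (T : ℝ≥0 → G →L[ℂ] G) : Prop :=
  IsC0Semigroup T ∧ ∀ (t : ℝ≥0) (x : G), ‖T t x‖ ≤ ‖x‖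

namespace IsContractionSemigroup

section Resolvent

variable {G : Type} [NormedAddCommGroup G] [InnerProductSpace ℂ G] {T : ℝ≥0 → G →L[ℂ] G}

lemma continuous_exp_neg_smul (hT : IsContractionSemigroup T) (x : G) :
    Continuous fun u : ℝ => Real.exp (-u) • T u.toNNReal x :=
  (Real.continuous_exp.comp continuous_neg).smul
    ((hT.1.2.2 x).comp continuous_real_toNNReal)

lemma norm_exp_neg_smul_le (hT : IsContractionSemigroup T) (x : G) (u : ℝ) :
    ‖Real.exp (-u) • T u.toNNReal x‖ ≤ Real.exp (-u) * ‖x‖ := by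
  rw [norm_smul, Real.norm_of_nonneg (Real.exp_nonneg _)]
  gcongr
  exact hT.2 _ x

lemma integrableOn_exp_neg_smul (hT : IsContractionSemigroup T) (x : G) (a : ℝ) :
    IntegrableOn (fun u : ℝ => Real.exp (-u) • T u.toNNReal x) (Ioi a) :=
  ((integrableOn_exp_neg_Ioi a).mul_const ‖x‖).mono'
    (hT.continuous_exp_neg_smul x).aestronglyMeasurable (.of_forall (hT.norm_exp_neg_smul_le x))

/-- The resolvent at `1` of the generator of a contraction semigroup, given as the Laplace
transform `x ↦ ∫₀^∞ e⁻ᵘ T_u x du` so that the unbounded generator is never needed. -/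
def resolventOne (hT : IsContractionSemigroup T) : G →L[ℂ] G :=
  LinearMap.mkContinuous
    { toFun x := ∫ u in Ioi (0 : ℝ), Real.exp (-u) • T u.toNNReal x
      map_add' x y := by
        simp_rw [map_add, smul_add]
        exact integral_add (hT.integrableOn_exp_neg_smul x 0) (hT.integrableOn_exp_neg_smul y 0)
      map_smul' c x := by
        simp_rw [map_smul, smul_comm _ c]
        exact integral_smul c _ }
    1 fun x =>
      calc ‖∫ u in Ioi (0 : ℝ), Real.exp (-u) • T u.toNNReal x‖
          ≤ ∫ u in Ioi (0 : ℝ), Real.exp (-u) * ‖x‖ :=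
            norm_integral_le_of_norm_le ((integrableOn_exp_neg_Ioi 0).mul_const _)
              (.of_forall (hT.norm_exp_neg_smul_le x))
        _ = 1 * ‖x‖ := by rw [integral_mul_const, integral_exp_neg_Ioi_zero]

lemma resolventOne_apply (hT : IsContractionSemigroup T) (x : G) :
    hT.resolventOne x = ∫ u in Ioi (0 : ℝ), Real.exp (-u) • T u.toNNReal x :=
  rfl

lemma resolventOne_map (hT : IsContractionSemigroup T) (t : ℝ≥0) (x : G) :
    hT.resolventOne (T t x) =
      Real.exp t • ∫ u in Ioi (t : ℝ), Real.exp (-u) • T u.toNNReal x := by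
  have hshift := setIntegral_Ioi_comp_add_right
    (fun u => Real.exp t • Real.exp (-u) • T u.toNNReal x) 0 t
  rw [zero_add] at hshift
  rw [← integral_smul, ← hshift, resolventOne_apply]
  refine setIntegral_congr_fun measurableSet_Ioi fun u (hu : 0 < u) => ?_
  simp only [smul_smul, ← Real.exp_add, Real.toNNReal_add hu.le t.coe_nonneg, Real.toNNReal_coe,
    hT.1.add_apply, neg_add_rev, add_neg_cancel_left]

/-- The cogenerator `(A + 1)(A - 1)⁻¹` of a contraction semigroup with generator `A`, written as
`1 - 2 (1 - A)⁻¹`. -/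
def cogenerator (hT : IsContractionSemigroup T) : G →L[ℂ] G :=
  1 - (2 : ℝ) • hT.resolventOne

lemma cogenerator_apply (hT : IsContractionSemigroup T) (x : G) :
    hT.cogenerator x = x - (2 : ℝ) • hT.resolventOne x :=
  rfl

lemma norm_cogenerator_sq (hT : IsContractionSemigroup T) (x : G) :
    ‖hT.cogenerator x‖ ^ 2 - ‖x‖ ^ 2 =
      4 * ⟪hT.resolventOne x, hT.resolventOne x - x⟫_ℝ := by
  rw [cogenerator_apply, norm_sub_sq_real, inner_sub_right, real_inner_self_eq_norm_sq, norm_smul,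
    inner_smul_right, real_inner_comm]
  norm_num
  ring

end Resolvent

variable {G : Type} [NormedAddCommGroup G] [InnerProductSpace ℂ G] [CompleteSpace G]
  {T : ℝ≥0 → G →L[ℂ] G}

lemma map_resolventOne (hT : IsContractionSemigroup T) (t : ℝ≥0) (x : G) :
    T t (hT.resolventOne x) = hT.resolventOne (T t x) := by
  rw [resolventOne_apply, ← integral_comp_comm _ (hT.integrableOn_exp_neg_smul x 0),
    resolventOne_apply]
  refine setIntegral_congr_fun measurableSet_Ioi fun u _ => ?_
  simp only [map_smul_of_tower, ← hT.1.add_apply, add_comm]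

lemma hasDerivWithinAt_resolventOne_map (hT : IsContractionSemigroup T) (x : G) {s : ℝ}
    (hs : 0 ≤ s) :
    HasDerivWithinAt (fun r : ℝ => hT.resolventOne (T r.toNNReal x))
      (hT.resolventOne (T s.toNNReal x) - T s.toNNReal x) (Ici 0) s := by
  have hformula : ∀ r ∈ Ici (0 : ℝ), hT.resolventOne (T r.toNNReal x) =
      Real.exp r • ∫ u in Ioi r, Real.exp (-u) • T u.toNNReal x := fun r hr => by
    rw [resolventOne_map, Real.coe_toNNReal r hr]
  have hderiv := (Real.hasDerivAt_exp s).smul <|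
    hasDerivAt_setIntegral_Ioi (hT.continuous_exp_neg_smul x) (hT.integrableOn_exp_neg_smul x 0) s
  refine (hderiv.hasDerivWithinAt.congr hformula (hformula s hs)).congr_deriv ?_
  rw [hformula s hs, smul_neg, smul_smul, ← Real.exp_add, add_neg_cancel, Real.exp_zero, one_smul]
  abel

lemma denseRange_resolventOne (hT : IsContractionSemigroup T) :
    DenseRange hT.resolventOne := fun x => by
  let orbit : ℝ → G := fun r => hT.resolventOne (T r.toNNReal x)
  let K : Submodule ℝ G := hT.resolventOne.range.restrictScalars ℝ
  have hderiv : derivWithin orbit (Ici 0) 0 = hT.resolventOne x - x := by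
    simpa [hT.1.zero_apply] using (hT.hasDerivWithinAt_resolventOne_map x le_rfl).derivWithin
      (uniqueDiffOn_Ici 0 0 self_mem_Ici)
  have hspan : Submodule.span ℝ (orbit '' Ici 0) ≤ K :=
    Submodule.span_le.2 (image_subset_iff.2 fun r _ => ⟨_, rfl⟩)
  have hmem : hT.resolventOne x - x ∈ K.topologicalClosure :=
    closure_mono hspan <| range_derivWithin_subset_closure_span_image orbit (by simp)
      ⟨0, hderiv⟩
  have hresolvent : hT.resolventOne x ∈ K.topologicalClosure := subset_closure ⟨x, rfl⟩
  rw [← sub_sub_cancel (hT.resolventOne x) x]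
  exact K.topologicalClosure.sub_mem hresolvent hmem

lemma hasDerivWithinAt_norm_resolventOne_sq (hT : IsContractionSemigroup T) (x : G) {s : ℝ}
    (hs : 0 ≤ s) :
    HasDerivWithinAt (fun r : ℝ => ‖hT.resolventOne (T r.toNNReal x)‖ ^ 2)
      ((‖hT.cogenerator (T s.toNNReal x)‖ ^ 2 - ‖T s.toNNReal x‖ ^ 2) / 2) (Ici 0) s :=
  (hT.hasDerivWithinAt_resolventOne_map x hs).norm_sq.congr_deriv <| by
    rw [norm_cogenerator_sq]
    ring

theorem isIsometrySemigroup_iff (hT : IsContractionSemigroup T) :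
    IsIsometrySemigroup T ↔ ∀ x, ‖hT.cogenerator x‖ = ‖x‖ := by
  refine ⟨fun hiso x => ?_, fun hcog => ⟨hT.1, fun t => ?_⟩⟩
  · have hconst : (fun r : ℝ => ‖hT.resolventOne (T r.toNNReal x)‖ ^ 2) =
        fun _ => ‖hT.resolventOne x‖ ^ 2 := by
      ext r
      rw [← hT.map_resolventOne, hiso.2]
    have hderiv := hT.hasDerivWithinAt_norm_resolventOne_sq x le_rfl
    rw [hconst, Real.toNNReal_zero, hT.1.zero_apply] at hderiv
    have hzero := (uniqueDiffOn_Ici 0 0 self_mem_Ici).eq_deriv _ hderiv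
      (hasDerivWithinAt_const 0 (Ici 0) _)
    rw [← sq_eq_sq₀ (norm_nonneg _) (norm_nonneg _)]
    linarith
  · have hrange : ∀ x, ‖T t (hT.resolventOne x)‖ = ‖hT.resolventOne x‖ := fun x => by
      have hconst := eq_of_hasDerivWithinAt_zero (convex_Ici 0)
        (fun s hs => by simpa [hcog] using hT.hasDerivWithinAt_norm_resolventOne_sq x hs)
        (mem_Ici.2 t.2) self_mem_Ici
      simpa [hT.1.zero_apply, ← hT.map_resolventOne] using hconst
    exact fun x => congrFun (hT.denseRange_resolventOne.equalizer (T t).continuous.norm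
      continuous_norm (funext hrange)) x

end IsContractionSemigroup

section Adjoint

variable {G : Type} [NormedAddCommGroup G] [InnerProductSpace ℂ G]

lemma isContractionSemigroup_of_tendsto_zero {T : ℝ≥0 → G →L[ℂ] G} (hzero : T 0 = 1)
    (hadd : ∀ s t, T (s + t) = T s ∘L T t) (hnorm : ∀ t x, ‖T t x‖ ≤ ‖x‖)
    (hlim : ∀ x, Tendsto (fun t => T t x) (𝓝 0) (𝓝 x)) : IsContractionSemigroup T := by
  refine ⟨⟨hzero, hadd, fun x => continuous_iff_continuousAt.2 fun s => ?_⟩, hnorm⟩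
  have hle : ∀ s t : ℝ≥0, s ≤ t → ‖T t x - T s x‖ ≤ ‖T (t - s) x - x‖ := fun s t hst =>
    calc ‖T t x - T s x‖ = ‖T s (T (t - s) x - x)‖ := by
          rw [map_sub, ← ContinuousLinearMap.comp_apply, ← hadd, add_tsub_cancel_of_le hst]
      _ ≤ ‖T (t - s) x - x‖ := hnorm _ _
  have hdist : ∀ t, dist (T t x) (T s x) ≤ ‖T (nndist t s) x - x‖ := fun t => by
    rw [dist_eq_norm, NNReal.nndist_eq]
    rcases le_total s t with hst | hts
    · simpa only [tsub_eq_zero_of_le hst, max_eq_left, zero_le] using hle s t hst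
    · simpa only [tsub_eq_zero_of_le hts, max_eq_right, zero_le, norm_sub_rev] using hle t s hts
  refine tendsto_iff_dist_tendsto_zero.2 <| squeeze_zero (fun _ => dist_nonneg) hdist ?_
  have hnndist : Tendsto (fun t => nndist t s) (𝓝 s) (𝓝 0) := by
    simpa using (continuous_id.nndist continuous_const : Continuous fun t => nndist t s).tendsto s
  simpa using (((hlim x).comp hnndist).sub_const x).norm

variable [CompleteSpace G]

lemma norm_adjoint_apply_le {A : G →L[ℂ] G} (hA : ∀ x, ‖A x‖ ≤ ‖x‖) (x : G) :
    ‖adjoint A x‖ ≤ ‖x‖ := by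
  have hnorm : ‖adjoint A‖ ≤ 1 := by
    rw [LinearIsometryEquiv.norm_map]
    exact A.opNorm_le_bound zero_le_one (by simpa using hA)
  simpa using (adjoint A).le_of_opNorm_le hnorm x

lemma norm_adjoint_apply_sub_self_sq_le {A : G →L[ℂ] G} (hA : ∀ x, ‖A x‖ ≤ ‖x‖) (x : G) :
    ‖adjoint A x - x‖ ^ 2 ≤ 2 * ‖x‖ * ‖A x - x‖ :=
  calc ‖adjoint A x - x‖ ^ 2
      = ‖adjoint A x‖ ^ 2 - 2 * RCLike.re ⟪x, A x⟫_ℂ + ‖x‖ ^ 2 := by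
        rw [norm_sub_sq (𝕜 := ℂ), adjoint_inner_left]
    _ ≤ ‖x‖ ^ 2 - 2 * RCLike.re ⟪x, A x⟫_ℂ + ‖x‖ ^ 2 := by
        gcongr
        exact norm_adjoint_apply_le hA x
    _ = 2 * RCLike.re ⟪x, x - A x⟫_ℂ := by
        rw [inner_sub_right, map_sub, inner_self_eq_norm_sq]
        ring
    _ ≤ 2 * (‖x‖ * ‖x - A x‖) := by
        gcongr
        exact re_inner_le_norm x _
    _ = 2 * ‖x‖ * ‖A x - x‖ := by rw [norm_sub_rev, mul_assoc]

namespace IsContractionSemigroup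

variable {T : ℝ≥0 → G →L[ℂ] G}

protected theorem adjoint (hT : IsContractionSemigroup T) :
    IsContractionSemigroup fun t => ContinuousLinearMap.adjoint (T t) := by
  refine isContractionSemigroup_of_tendsto_zero ?_ (fun s t => ?_)
    (fun t => norm_adjoint_apply_le (hT.2 t)) fun x => ?_
  · rw [hT.1.1, ← star_eq_adjoint, star_one]
  · rw [add_comm, hT.1.2.1, adjoint_comp]
  · have hlim : Tendsto (fun t => √(2 * ‖x‖ * ‖T t x - x‖)) (𝓝 0) (𝓝 0) := by
      simpa [hT.1.zero_apply] using
        ((((hT.1.2.2 x).tendsto 0).sub_const x).norm.const_mul (2 * ‖x‖)).sqrt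
    refine tendsto_iff_norm_sub_tendsto_zero.2 <| squeeze_zero (fun _ => norm_nonneg _)
      (fun t => Real.le_sqrt_of_sq_le ?_) hlim
    exact norm_adjoint_apply_sub_self_sq_le (hT.2 t) x

lemma resolventOne_adjoint (hT : IsContractionSemigroup T) :
    hT.adjoint.resolventOne = ContinuousLinearMap.adjoint hT.resolventOne := by
  ext x
  refine ext_inner_left ℂ fun y => ?_
  rw [adjoint_inner_right, ← inner_conj_symm (hT.resolventOne y), resolventOne_apply,
    resolventOne_apply, ← integral_inner (hT.adjoint.integrableOn_exp_neg_smul x 0),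
    ← integral_inner (hT.integrableOn_exp_neg_smul y 0), ← integral_conj]
  refine setIntegral_congr_fun measurableSet_Ioi fun u _ => ?_
  simp only [inner_smul_right_eq_smul, adjoint_inner_right, Complex.real_smul, map_mul,
    Complex.conj_ofReal, inner_conj_symm]

lemma cogenerator_adjoint (hT : IsContractionSemigroup T) :
    hT.adjoint.cogenerator = ContinuousLinearMap.adjoint hT.cogenerator := by
  simp [cogenerator, ← star_eq_adjoint, hT.resolventOne_adjoint]

lemma apply_eq_exp_neg_smul_of_cogenerator_eq_zero (hT : IsContractionSemigroup T) {x : G}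
    (hx : hT.cogenerator x = 0) (t : ℝ≥0) : T t x = Real.exp (-t) • x := by
  let orbit : ℝ → G := fun s => hT.resolventOne (T s.toNNReal x)
  have hfixed : ∀ s : ℝ, T s.toNNReal x = (2 : ℝ) • orbit s := fun s => by
    rw [cogenerator_apply, sub_eq_zero] at hx
    simp only [orbit, ← hT.map_resolventOne, ← map_smul_of_tower, ← hx]
  have hderiv : ∀ s ∈ Ici (0 : ℝ),
      HasDerivWithinAt (fun r => Real.exp r • orbit r) 0 (Ici 0) s := fun s hs => by
    refine ((Real.hasDerivAt_exp s).hasDerivWithinAt.smul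
      (hT.hasDerivWithinAt_resolventOne_map x hs)).congr_deriv ?_
    change Real.exp s • (orbit s - _) + Real.exp s • orbit s = 0
    rw [hfixed, two_smul]
    module
  have hconst : Real.exp t • orbit t = orbit 0 := by
    simpa using eq_of_hasDerivWithinAt_zero (convex_Ici 0) hderiv t.coe_nonneg self_mem_Ici
  have horbit : orbit t = Real.exp (-t) • orbit 0 := by
    rw [← hconst, smul_smul, ← Real.exp_add, neg_add_cancel, Real.exp_zero, one_smul]
  calc T t x = (2 : ℝ) • orbit t := by simpa using hfixed t
    _ = Real.exp (-t) • (2 : ℝ) • orbit 0 := by rw [horbit, smul_comm]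
    _ = Real.exp (-t) • x := by rw [← hfixed, Real.toNNReal_zero, hT.1.zero_apply]

end IsContractionSemigroup

end Adjoint

section DeficiencySpace

variable {G : Type} [NormedAddCommGroup G] [InnerProductSpace ℂ G]
  {V : ℝ≥0 → G →L[ℂ] G}

lemma IsIsometrySemigroup.isContractionSemigroup (hV : IsIsometrySemigroup V) :
    IsContractionSemigroup V :=
  ⟨hV.1, fun t x => (hV.2 t x).le⟩

variable [CompleteSpace G]

/-- The deficiency space of a semigroup of isometries: the common eigenspace of the adjoints
`(V_t)*` with eigenvalues `e⁻ᵗ`. It is the kernel of the adjoint of the cogenerator. -/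
def deficiencySpace (V : ℝ≥0 → G →L[ℂ] G) : Submodule ℂ G :=
  ⨅ t : ℝ≥0, (adjoint (V t) - Real.exp (-t) • 1).ker

lemma mem_deficiencySpace {x : G} :
    x ∈ deficiencySpace V ↔ ∀ t : ℝ≥0, adjoint (V t) x = Real.exp (-t) • x := by
  simp [deficiencySpace, sub_eq_zero]

instance : CompleteSpace (deficiencySpace V) := by
  refine IsClosed.completeSpace_coe (hs := ?_)
  rw [deficiencySpace, Submodule.coe_iInf]
  exact isClosed_iInter fun t => isClosed_ker _

theorem IsIsometrySemigroup.isUnitarySemigroup_of_deficiencySpace_eq_bot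
    (hV : IsIsometrySemigroup V) (hbot : deficiencySpace V = ⊥) : IsUnitarySemigroup V := by
  have hT := hV.isContractionSemigroup
  have hcoisometry : hT.cogenerator ∘L adjoint hT.cogenerator = 1 := by
    ext x
    have hker : adjoint hT.cogenerator (x - hT.cogenerator (adjoint hT.cogenerator x)) = 0 := by
      have hcog := (norm_map_iff_adjoint_comp_self _).1 (hT.isIsometrySemigroup_iff.1 hV)
      rw [map_sub, ← ContinuousLinearMap.comp_apply (adjoint _), hcog]
      exact sub_self _
    have hmem : x - hT.cogenerator (adjoint hT.cogenerator x) ∈ deficiencySpace V :=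
      mem_deficiencySpace.2 <| hT.adjoint.apply_eq_exp_neg_smul_of_cogenerator_eq_zero <| by
        rwa [hT.cogenerator_adjoint]
    rw [hbot, Submodule.mem_bot, sub_eq_zero] at hmem
    exact hmem.symm
  have hadj : IsIsometrySemigroup fun t => adjoint (V t) := by
    rw [hT.adjoint.isIsometrySemigroup_iff, hT.cogenerator_adjoint, norm_map_iff_adjoint_comp_self,
      adjoint_adjoint, hcoisometry]
  refine ⟨hV.1, fun t => ⟨hV.2 t, fun y => ⟨adjoint (V t) y, ?_⟩⟩⟩
  have hcomp := (norm_map_iff_adjoint_comp_self _).1 (hadj.2 t)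
  rw [adjoint_adjoint] at hcomp
  exact DFunLike.congr_fun hcomp y

end DeficiencySpace

section Reduction

variable {G : Type} [NormedAddCommGroup G] [InnerProductSpace ℂ G] {V : ℝ≥0 → G →L[ℂ] G}
  {L : Submodule ℂ G}

lemma IsC0Semigroup.restrict (hV : IsC0Semigroup V) (hL : ∀ t, ∀ x ∈ L, V t x ∈ L) :
    IsC0Semigroup fun t => (V t).restrict (hL t) :=
  ⟨by ext x; exact hV.zero_apply _, fun s t => by ext x; exact hV.add_apply s t _,
    fun x => (hV.2.2 x).subtype_mk _⟩

lemma IsIsometrySemigroup.restrict (hV : IsIsometrySemigroup V)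
    (hL : ∀ t, ∀ x ∈ L, V t x ∈ L) : IsIsometrySemigroup fun t => (V t).restrict (hL t) :=
  ⟨hV.1.restrict hL, fun t x => hV.2 t x⟩

lemma IsUnitarySemigroup.isIsometrySemigroup (hV : IsUnitarySemigroup V) :
    IsIsometrySemigroup V :=
  ⟨hV.1, fun t => (hV.2 t).1⟩

lemma IsUnitarySemigroup.isUnitarySemigroupOn (hL : ∀ t, ∀ x ∈ L, V t x ∈ L)
    (hV : IsUnitarySemigroup fun t => (V t).restrict (hL t)) : IsUnitarySemigroupOn V L :=
  fun t => ⟨hL t, fun x hx => (hV.2 t).1 ⟨x, hx⟩, fun y hy => by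
    obtain ⟨x, hx⟩ := (hV.2 t).2 ⟨y, hy⟩
    exact ⟨x, x.2, congrArg Subtype.val hx⟩⟩

variable [CompleteSpace G]

lemma IsIsometrySemigroup.adjoint_apply_self (hV : IsIsometrySemigroup V) (t : ℝ≥0) (x : G) :
    adjoint (V t) (V t x) = x :=
  DFunLike.congr_fun ((norm_map_iff_adjoint_comp_self _).1 (hV.2 t)) x

lemma IsUnitarySemigroup.apply_adjoint_self (hV : IsUnitarySemigroup V) (t : ℝ≥0) (x : G) :
    V t (adjoint (V t) x) = x := by
  obtain ⟨y, rfl⟩ := (hV.2 t).2 x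
  rw [hV.isIsometrySemigroup.adjoint_apply_self]

lemma IsUnitarySemigroup.restrict (hV : IsUnitarySemigroup V) (hL : ReducedBy V L) :
    IsUnitarySemigroup fun t => (V t).restrict (hL.1 t) :=
  ⟨hV.1.restrict hL.1, fun t => ⟨fun x => (hV.2 t).1 x,
    fun y => ⟨⟨adjoint (V t) y, hL.2 t y y.2⟩, Subtype.ext (hV.apply_adjoint_self t y)⟩⟩⟩

namespace ReducedBy

lemma adjoint_restrict [CompleteSpace L] (hL : ReducedBy V L) (t : ℝ≥0) :
    adjoint ((V t).restrict (hL.1 t)) = (adjoint (V t)).restrict (hL.2 t) := by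
  symm
  rw [eq_adjoint_iff]
  intro x y
  rw [Submodule.coe_inner, Submodule.coe_inner, coe_restrict_apply, coe_restrict_apply,
    adjoint_inner_left]

lemma orthogonal (hL : ReducedBy V L) : ReducedBy V Lᗮ := by
  refine ⟨fun t x hx y hy => ?_, fun t x hx y hy => ?_⟩
  · rw [← adjoint_inner_left]
    exact hx _ (hL.2 t y hy)
  · rw [adjoint_inner_right]
    exact hx _ (hL.1 t y hy)

lemma span {S : Set G} (hV : ∀ t, ∀ x ∈ S, V t x ∈ Submodule.span ℂ S)
    (hadj : ∀ t, ∀ x ∈ S, adjoint (V t) x ∈ Submodule.span ℂ S) :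
    ReducedBy V (Submodule.span ℂ S) :=
  ⟨fun t => (Submodule.span_le (p := (Submodule.span ℂ S).comap (V t : G →ₗ[ℂ] G))).2 (hV t),
    fun t => (Submodule.span_le
      (p := (Submodule.span ℂ S).comap (adjoint (V t) : G →ₗ[ℂ] G))).2 (hadj t)⟩

end ReducedBy

end Reduction

section ShiftPart

variable {G : Type} [NormedAddCommGroup G] [InnerProductSpace ℂ G] [CompleteSpace G]
  {V : ℝ≥0 → G →L[ℂ] G}

/-- The span of the orbits of the deficiency space. Its closure carries the shift summand of the
Wold decomposition of a semigroup of isometries. -/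
def shiftPart (V : ℝ≥0 → G →L[ℂ] G) : Submodule ℂ G :=
  Submodule.span ℂ (range fun p : ℝ≥0 × deficiencySpace V => V p.1 p.2)

lemma apply_mem_shiftPart (t : ℝ≥0) {ξ : G} (hξ : ξ ∈ deficiencySpace V) :
    V t ξ ∈ shiftPart V :=
  Submodule.subset_span ⟨(t, ⟨ξ, hξ⟩), rfl⟩

namespace IsIsometrySemigroup

lemma reducedBy_shiftPart (hV : IsIsometrySemigroup V) : ReducedBy V (shiftPart V) := by
  refine ReducedBy.span ?_ ?_ <;> rintro t _ ⟨⟨s, ξ, hξ⟩, rfl⟩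
  · rw [← hV.1.add_apply]
    exact apply_mem_shiftPart (t + s) hξ
  change adjoint (V t) (V s ξ) ∈ shiftPart V
  rcases le_total t s with hts | hst
  · rw [← add_tsub_cancel_of_le hts, hV.1.add_apply, hV.adjoint_apply_self]
    exact apply_mem_shiftPart (s - t) hξ
  · rw [← tsub_add_cancel_of_le hst, add_comm, hV.1.2.1, adjoint_comp,
      ContinuousLinearMap.comp_apply, hV.adjoint_apply_self, mem_deficiencySpace.1 hξ]
    rw [← hV.1.zero_apply (_ • ξ)]
    exact apply_mem_shiftPart 0 ((deficiencySpace V).smul_of_tower_mem _ hξ)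

theorem isUnitarySemigroupOn_orthogonal_shiftPart (hV : IsIsometrySemigroup V) :
    IsUnitarySemigroupOn V (shiftPart V)ᗮ := by
  have hreduces := hV.reducedBy_shiftPart.orthogonal
  refine ((hV.restrict hreduces.1).isUnitarySemigroup_of_deficiencySpace_eq_bot
    ((Submodule.eq_bot_iff _).2 fun x hx => ?_)).isUnitarySemigroupOn hreduces.1
  have hdeficiency : (x : G) ∈ deficiencySpace V := mem_deficiencySpace.2 fun t => by
    simpa [hreduces.adjoint_restrict] using congrArg Subtype.val (mem_deficiencySpace.1 hx t)
  have hshift : (x : G) ∈ shiftPart V := by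
    simpa [hV.1.zero_apply] using apply_mem_shiftPart 0 hdeficiency
  exact Subtype.ext (inner_self_eq_zero.1 (x.2 x hshift))

theorem dense_shiftPart (hV : IsIsometrySemigroup V) (hcnu : IsCnu V) :
    Dense (shiftPart V : Set G) := by
  rw [Submodule.dense_iff_topologicalClosure_eq_top, Submodule.topologicalClosure_eq_top_iff]
  exact hcnu _ (Submodule.isClosed_orthogonal _) le_top hV.reducedBy_shiftPart.orthogonal
    hV.isUnitarySemigroupOn_orthogonal_shiftPart

end IsIsometrySemigroup

end ShiftPart

section Commutation

variable {G : Type} [NormedAddCommGroup G] [InnerProductSpace ℂ G] [CompleteSpace G]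
  {V₁ V₂ : ℝ≥0 → G →L[ℂ] G}

lemma SgCommute.sgDoublyCommute (hc : SgCommute V₁ V₂) (h₂ : IsUnitarySemigroup V₂) :
    SgDoublyCommute V₁ V₂ := by
  refine ⟨hc, fun t s => ?_⟩
  ext x
  calc V₁ t (adjoint (V₂ s) x)
      = adjoint (V₂ s) (V₂ s (V₁ t (adjoint (V₂ s) x))) :=
        (h₂.isIsometrySemigroup.adjoint_apply_self s _).symm
    _ = adjoint (V₂ s) (V₁ t (V₂ s (adjoint (V₂ s) x))) :=
        congrArg (adjoint (V₂ s)) (DFunLike.congr_fun (hc t s) _).symm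
    _ = adjoint (V₂ s) (V₁ t x) := by rw [h₂.apply_adjoint_self]

lemma apply_mem_deficiencySpace {B : G →L[ℂ] G}
    (hB : ∀ t, adjoint (V₁ t) ∘L B = B ∘L adjoint (V₁ t)) {x : G} (hx : x ∈ deficiencySpace V₁) :
    B x ∈ deficiencySpace V₁ :=
  mem_deficiencySpace.2 fun t => by
    rw [← ContinuousLinearMap.comp_apply, hB, ContinuousLinearMap.comp_apply,
      mem_deficiencySpace.1 hx, map_smul_of_tower]

lemma SgDoublyCommute.reducedBy_deficiencySpace (hc : SgDoublyCommute V₁ V₂) :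
    ReducedBy V₂ (deficiencySpace V₁) := by
  refine ⟨fun s _ => apply_mem_deficiencySpace fun t => ?_,
    fun s _ => apply_mem_deficiencySpace fun t => ?_⟩
  · simpa using (congrArg adjoint (hc.2 t s)).symm
  · simpa using (congrArg adjoint (hc.1 t s)).symm

end Commutation

section Gram

variable {𝕜 ι E E' : Type*} [RCLike 𝕜] [NormedAddCommGroup E] [InnerProductSpace 𝕜 E]
  [NormedAddCommGroup E'] [InnerProductSpace 𝕜 E']

lemma inner_apply_apply_eq_of_forall_inner_apply_eq {T : ℝ≥0 → E →L[𝕜] E}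
    {T' : ℝ≥0 → E' →L[𝕜] E'} (hadd : ∀ s t, T (s + t) = T s ∘L T t)
    (hadd' : ∀ s t, T' (s + t) = T' s ∘L T' t) (hnorm : ∀ t x, ‖T t x‖ = ‖x‖)
    (hnorm' : ∀ t x, ‖T' t x‖ = ‖x‖) {e : ι → E} {e' : ι → E'}
    (h : ∀ r i j, inner 𝕜 (T r (e i)) (e j) = inner 𝕜 (T' r (e' i)) (e' j))
    (s t : ℝ≥0) (i j : ι) :
    inner 𝕜 (T s (e i)) (T t (e j)) = inner 𝕜 (T' s (e' i)) (T' t (e' j)) := by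
  wlog hts : t ≤ s generalizing s t i j
  · rw [← inner_conj_symm, this t s j i (le_of_not_ge hts), inner_conj_symm]
  rw [← add_tsub_cancel_of_le hts, hadd, hadd', ContinuousLinearMap.comp_apply,
    ContinuousLinearMap.comp_apply, (LinearMap.norm_map_iff_inner_map_map (T t)).1 (hnorm t),
    (LinearMap.norm_map_iff_inner_map_map (T' t)).1 (hnorm' t), h]

theorem exists_linearIsometryEquiv_of_inner_eq [CompleteSpace E] [CompleteSpace E'] {v : ι → E}
    {w : ι → E'} (hv : Dense (Submodule.span 𝕜 (range v) : Set E))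
    (hw : Dense (Submodule.span 𝕜 (range w) : Set E'))
    (h : ∀ i j, inner 𝕜 (v i) (v j) = inner 𝕜 (w i) (w j)) :
    ∃ Z : E ≃ₗᵢ[𝕜] E', ∀ i, Z (v i) = w i := by
  let combV : (ι →₀ 𝕜) →ₗ[𝕜] E := Finsupp.linearCombination 𝕜 v
  let combW : (ι →₀ 𝕜) →ₗ[𝕜] E' := Finsupp.linearCombination 𝕜 w
  have hdenseV : DenseRange combV := by
    rwa [DenseRange, ← LinearMap.coe_range, Finsupp.range_linearCombination]
  have hdenseW : DenseRange combW := by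
    rwa [DenseRange, ← LinearMap.coe_range, Finsupp.range_linearCombination]
  have hnorm : ∀ c, ‖combW c‖ = ‖combV c‖ := fun c => by
    rw [@norm_eq_sqrt_re_inner 𝕜, @norm_eq_sqrt_re_inner 𝕜]
    simp only [combV, combW, Finsupp.linearCombination_apply, Finsupp.sum_inner,
      Finsupp.inner_sum, inner_smul_left, inner_smul_right, h]
  refine ⟨(LinearEquiv.refl 𝕜 _).extendOfIsometry combV combW hdenseV hdenseW hnorm, fun i => ?_⟩
  simpa [combV, combW] using (LinearEquiv.refl 𝕜 _).extendOfIsometry_eq combV combW hdenseV hdenseW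
    hnorm (Finsupp.single i 1)

end Gram

section RightShift

variable {F : Type*} [NormedAddCommGroup F] {p : ℝ≥0∞}

lemma measurePreserving_sub_rplus (t : ℝ≥0) :
    MeasurePreserving (fun x : ℝ => x - t) (rplus.restrict (Ici (t : ℝ))) rplus := by
  have hmp := (measurePreserving_sub_right volume (t : ℝ)).restrict_preimage
    (measurableSet_Ici (a := (0 : ℝ)))
  rw [preimage_sub_const_Ici, zero_add] at hmp
  rwa [rplus, Measure.restrict_restrict measurableSet_Ici,
    inter_eq_left.2 (Ici_subset_Ici.2 t.coe_nonneg)]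

lemma indicator_comp_sub_ae_congr (t : ℝ≥0) {f g : ℝ → F} (hfg : f =ᵐ[rplus] g) :
    (Ici (t : ℝ)).indicator (fun x => f (x - t)) =ᵐ[rplus]
      (Ici (t : ℝ)).indicator fun x => g (x - t) :=
  (ae_eq_restrict_iff_indicator_ae_eq measurableSet_Ici).1 <|
    (measurePreserving_sub_rplus t).quasiMeasurePreserving.ae_eq_comp hfg

lemma memLp_indicator_comp_sub (t : ℝ≥0) {f : ℝ → F} (hf : MemLp f p rplus) :
    MemLp ((Ici (t : ℝ)).indicator fun x => f (x - t)) p rplus :=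
  (memLp_indicator_iff_restrict measurableSet_Ici).2 <|
    hf.comp_measurePreserving (measurePreserving_sub_rplus t)

lemma eLpNorm_indicator_comp_sub (t : ℝ≥0) {f : ℝ → F} (hf : AEStronglyMeasurable f rplus) :
    eLpNorm ((Ici (t : ℝ)).indicator fun x => f (x - t)) p rplus = eLpNorm f p rplus := by
  rw [eLpNorm_indicator_eq_eLpNorm_restrict measurableSet_Ici]
  exact eLpNorm_comp_measurePreserving hf (measurePreserving_sub_rplus t)

variable [NormedSpace ℂ F] [Fact (1 ≤ p)]

/-- The right shift by `t` on `Lᵖ(ℝ₊, F)`, as a linear isometry. -/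
def rightShift (t : ℝ≥0) : Lp F p rplus →ₗᵢ[ℂ] Lp F p rplus where
  toFun f := (memLp_indicator_comp_sub t (Lp.memLp f)).toLp
  map_add' f g := by
    rw [← MemLp.toLp_add, MemLp.toLp_eq_toLp_iff, ← indicator_add']
    exact indicator_comp_sub_ae_congr t (Lp.coeFn_add f g)
  map_smul' c f := by
    rw [RingHom.id_apply, ← MemLp.toLp_const_smul, MemLp.toLp_eq_toLp_iff]
    exact (indicator_comp_sub_ae_congr t (Lp.coeFn_smul c f)).trans
      (.of_eq (indicator_const_smul (Ici (t : ℝ)) c fun x => f (x - t)))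
  norm_map' f := by
    change ‖(memLp_indicator_comp_sub t (Lp.memLp f)).toLp‖ = ‖f‖
    rw [Lp.norm_toLp, eLpNorm_indicator_comp_sub t (Lp.aestronglyMeasurable f), Lp.norm_def]

lemma coeFn_rightShift (t : ℝ≥0) (f : Lp F p rplus) :
    rightShift t f =ᵐ[rplus] (Ici (t : ℝ)).indicator fun x => f (x - t) :=
  MemLp.coeFn_toLp (memLp_indicator_comp_sub t (Lp.memLp f))

lemma rightShift_add (s t : ℝ≥0) (f : Lp F p rplus) :
    rightShift (s + t) f = rightShift s (rightShift t f) := by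
  apply Lp.ext
  refine (coeFn_rightShift _ f).trans <| .trans (.of_eq ?_) <|
    (indicator_comp_sub_ae_congr s (coeFn_rightShift t f)).symm.trans
      (coeFn_rightShift s _).symm
  ext x
  by_cases hx : (s : ℝ) + t ≤ x
  · have hsx : (s : ℝ) ≤ x := by linarith [t.coe_nonneg]
    have htx : (t : ℝ) ≤ x - s := by linarith
    simp [hx, hsx, htx, sub_sub]
  · have htx : ¬(t : ℝ) ≤ x - s := by linarith
    simp [indicator, hx, htx]

lemma compLpL_rightShift {F' : Type*} [NormedAddCommGroup F'] [NormedSpace ℂ F'] (B : F →L[ℂ] F')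
    (t : ℝ≥0) (f : Lp F p rplus) :
    B.compLpL p rplus (rightShift t f) = rightShift t (B.compLpL p rplus f) := by
  apply Lp.ext
  refine (B.coeFn_compLpL _).trans <| .trans ?_ <|
    (indicator_comp_sub_ae_congr t (B.coeFn_compLpL f)).symm.trans (coeFn_rightShift t _).symm
  filter_upwards [coeFn_rightShift t f] with x hx
  by_cases htx : (t : ℝ) ≤ x <;> simp [hx, htx]

end RightShift

lemma isRightShiftOp_rightShift {F : Type} [NormedAddCommGroup F] [InnerProductSpace ℂ F]
    (t : ℝ≥0) : IsRightShiftOp F t (rightShift t).toContinuousLinearMap := fun f => by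
  filter_upwards [coeFn_rightShift t f] with x hx
  simpa [indicator] using hx

section Exponential

variable {F : Type*} [NormedAddCommGroup F] [InnerProductSpace ℂ F]

/-- The function `x ↦ √2 e⁻ˣ`, normalised in `L²(ℝ₊)`. -/
def expProfile (x : ℝ) : ℝ :=
  √2 * Real.exp (-x)

lemma expProfile_ne_zero (x : ℝ) : expProfile x ≠ 0 := by
  unfold expProfile
  positivity

lemma expProfile_sub (x t : ℝ) : expProfile (x - t) = Real.exp t * expProfile x := by
  rw [expProfile, neg_sub, sub_eq_add_neg, Real.exp_add, expProfile]
  ring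

lemma expProfile_sq (x : ℝ) : expProfile x ^ 2 = 2 * Real.exp (-2 * x) := by
  rw [expProfile, mul_pow, Real.sq_sqrt zero_le_two, ← Real.exp_nat_mul]
  push_cast
  ring_nf

lemma integral_Ioi_expProfile_sq (t : ℝ) : ∫ x in Ioi t, expProfile x ^ 2 = Real.exp (-2 * t) := by
  simp_rw [expProfile_sq]
  rw [integral_const_mul, integral_exp_mul_Ioi (by simp)]
  ring

lemma rplus_eq_restrict_Ioi : rplus = volume.restrict (Ioi 0) :=
  restrict_Ioi_eq_restrict_Ici.symm

lemma memLp_expProfile : MemLp expProfile 2 rplus := by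
  have hmeas : Continuous expProfile := by
    unfold expProfile
    fun_prop
  rw [memLp_two_iff_integrable_sq hmeas.aestronglyMeasurable, rplus_eq_restrict_Ioi]
  simp_rw [expProfile_sq]
  exact (integrableOn_exp_mul_Ioi (by simp) 0).const_mul 2

lemma memLp_expProfile_smul (ξ : F) : MemLp (fun x => expProfile x • ξ) 2 rplus :=
  (ContinuousLinearMap.toSpanSingleton ℝ ξ).comp_memLp' memLp_expProfile

/-- The element `x ↦ √2 e⁻ˣ ξ` of `L²(ℝ₊, F)`, the image of `ξ ∈ F` in the shift model. -/
def expVec (ξ : F) : Lp F 2 rplus :=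
  (memLp_expProfile_smul ξ).toLp

lemma coeFn_expVec (ξ : F) : expVec ξ =ᵐ[rplus] fun x => expProfile x • ξ :=
  MemLp.coeFn_toLp _

lemma compLpL_expVec {F' : Type*} [NormedAddCommGroup F'] [InnerProductSpace ℂ F']
    (B : F →L[ℂ] F') (ξ : F) : B.compLpL 2 rplus (expVec ξ) = expVec (B ξ) := by
  apply Lp.ext
  refine (B.coeFn_compLpL _).trans <| .trans ?_ (coeFn_expVec _).symm
  filter_upwards [coeFn_expVec ξ] with x hx
  rw [hx, map_smul_of_tower]

lemma coeFn_rightShift_expVec (t : ℝ≥0) (ξ : F) :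
    rightShift t (expVec ξ) =ᵐ[rplus]
      (Ioi (t : ℝ)).indicator fun x => (Real.exp t * expProfile x) • ξ := by
  refine (coeFn_rightShift t _).trans <| (indicator_comp_sub_ae_congr t (coeFn_expVec ξ)).trans ?_
  simp_rw [expProfile_sub]
  exact ae_restrict_of_ae (indicator_ae_eq_of_ae_eq_set Ioi_ae_eq_Ici.symm)

lemma integrableOn_expProfile_smul (f : Lp F 2 rplus) :
    IntegrableOn (fun x => expProfile x • f x) (Ioi 0) := by
  rw [IntegrableOn, ← rplus_eq_restrict_Ioi, ← memLp_one_iff_integrable]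
  exact MemLp.smul (𝕜 := ℝ) (Lp.memLp f) memLp_expProfile

variable [CompleteSpace F]

lemma inner_rightShift_expVec (t : ℝ≥0) (ξ : F) (f : Lp F 2 rplus) :
    ⟪rightShift t (expVec ξ), f⟫_ℂ =
      Real.exp t * ⟪ξ, ∫ x in Ioi (t : ℝ), expProfile x • f x⟫_ℂ := by
  have hsub : Ioi (t : ℝ) ⊆ Ioi 0 := Ioi_subset_Ioi t.coe_nonneg
  have hrestrict : rplus.restrict (Ioi (t : ℝ)) = volume.restrict (Ioi (t : ℝ)) := by
    rw [rplus_eq_restrict_Ioi, Measure.restrict_restrict measurableSet_Ioi, inter_eq_left.2 hsub]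
  have hpointwise : (fun x => ⟪rightShift t (expVec ξ) x, f x⟫_ℂ) =ᵐ[rplus]
      (Ioi (t : ℝ)).indicator fun x => Real.exp t * ⟪ξ, expProfile x • f x⟫_ℂ := by
    filter_upwards [coeFn_rightShift_expVec t ξ] with x hx
    by_cases htx : (t : ℝ) < x
    · simp [hx, htx, inner_smul_left_eq_smul, inner_smul_right_eq_smul, mul_assoc]
    · simp [hx, htx]
  rw [L2.inner_def, integral_congr_ae hpointwise, integral_indicator measurableSet_Ioi,
    hrestrict, integral_const_mul, integral_inner ((integrableOn_expProfile_smul f).mono_set hsub)]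

lemma inner_rightShift_expVec_expVec (t : ℝ≥0) (ξ η : F) :
    ⟪rightShift t (expVec ξ), expVec η⟫_ℂ = Real.exp (-t) * ⟪ξ, η⟫_ℂ := by
  have hintegral : ∫ x in Ioi (t : ℝ), expProfile x • expVec η x = Real.exp (-2 * t) • η := by
    rw [← integral_Ioi_expProfile_sq, ← integral_smul_const]
    refine integral_congr_ae <| ae_restrict_of_ae_restrict_of_subset
      (Ioi_subset_Ioi t.coe_nonneg) ?_
    rw [← rplus_eq_restrict_Ioi]
    filter_upwards [coeFn_expVec η] with x hx
    rw [hx, smul_smul, sq]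
  rw [inner_rightShift_expVec, hintegral, inner_smul_right_eq_smul, Complex.real_smul, ← mul_assoc,
    ← Complex.ofReal_mul, ← Real.exp_add]
  ring_nf

lemma dense_span_rightShift_expVec :
    Dense (Submodule.span ℂ (range fun q : ℝ≥0 × F => rightShift q.1 (expVec q.2)) :
      Set (Lp F 2 rplus)) := by
  rw [Submodule.dense_iff_topologicalClosure_eq_top, Submodule.topologicalClosure_eq_top_iff,
    Submodule.eq_bot_iff]
  intro f hf
  have hintegral : ∀ t : ℝ, 0 ≤ t → ∫ x in Ioi t, expProfile x • f x = 0 := fun t ht => by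
    lift t to ℝ≥0 using ht
    refine ext_inner_left ℂ fun ξ => ?_
    have hinner : ⟪rightShift t (expVec ξ), f⟫_ℂ = 0 :=
      hf _ (Submodule.subset_span ⟨(t, ξ), rfl⟩)
    simpa [inner_rightShift_expVec] using hinner
  have hae := ae_restrict_eq_zero_of_forall_setIntegral_Ioi_eq_zero
    (integrableOn_expProfile_smul f) hintegral
  rw [← rplus_eq_restrict_Ioi] at hae
  rw [Lp.eq_zero_iff_ae_eq_zero]
  filter_upwards [hae] with x hx
  exact (smul_eq_zero.1 hx).resolve_left (expProfile_ne_zero x)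

end Exponential

section Model

variable {G : Type} [NormedAddCommGroup G] [InnerProductSpace ℂ G] [CompleteSpace G]
  {V : ℝ≥0 → G →L[ℂ] G}

theorem IsIsometrySemigroup.exists_linearIsometryEquiv_rightShift (hV : IsIsometrySemigroup V)
    (hdense : Dense (shiftPart V : Set G)) :
    ∃ Z : G ≃ₗᵢ[ℂ] Lp (deficiencySpace V) 2 rplus,
      ∀ (t : ℝ≥0) (ξ : deficiencySpace V), Z (V t ξ) = rightShift t (expVec ξ) := by
  have hinner : ∀ (r : ℝ≥0) (ξ η : deficiencySpace V), ⟪V r ξ, (η : G)⟫_ℂ =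
      ⟪(rightShift r).toContinuousLinearMap (expVec ξ), expVec η⟫_ℂ := fun r ξ η => by
    rw [← adjoint_inner_right, mem_deficiencySpace.1 η.2, inner_smul_right_eq_smul,
      Complex.real_smul, LinearIsometry.coe_toContinuousLinearMap,
      inner_rightShift_expVec_expVec, Submodule.coe_inner]
  obtain ⟨Z, hZ⟩ := exists_linearIsometryEquiv_of_inner_eq hdense
    (dense_span_rightShift_expVec (F := deficiencySpace V)) fun i j =>
      inner_apply_apply_eq_of_forall_inner_apply_eq hV.1.2.1
        (fun s t => ContinuousLinearMap.ext (rightShift_add s t)) hV.2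
        (fun t => (rightShift t).norm_map) hinner i.1 j.1 i.2 j.2
  exact ⟨Z, fun t ξ => hZ (t, ξ)⟩

variable {Z : G ≃ₗᵢ[ℂ] Lp (deficiencySpace V) 2 rplus}

lemma eqOn_of_dense_shiftPart {E : Type*} [NormedAddCommGroup E] [NormedSpace ℂ E]
    (hdense : Dense (shiftPart V : Set G)) {A B : G →L[ℂ] E}
    (h : ∀ (t : ℝ≥0) (ξ : deficiencySpace V), A (V t ξ) = B (V t ξ)) (x : G) : A x = B x :=
  DFunLike.congr_fun (ContinuousLinearMap.ext_on hdense (by rintro _ ⟨⟨t, ξ⟩, rfl⟩; exact h t ξ)) x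

lemma IsC0Semigroup.model_apply_eq_rightShift (hV : IsC0Semigroup V)
    (hdense : Dense (shiftPart V : Set G))
    (hZ : ∀ (t : ℝ≥0) (ξ : deficiencySpace V), Z (V t ξ) = rightShift t (expVec ξ))
    (t : ℝ≥0) (x : G) : Z (V t x) = rightShift t (Z x) :=
  eqOn_of_dense_shiftPart hdense (A := (Z : G →L[ℂ] Lp (deficiencySpace V) 2 rplus) ∘L V t)
    (B := (rightShift t).toContinuousLinearMap ∘L (Z : G →L[ℂ] Lp (deficiencySpace V) 2 rplus))
    (fun s ξ => by simp [← hV.add_apply, hZ, rightShift_add]) x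

lemma model_apply_eq_compLpL (hdense : Dense (shiftPart V : Set G))
    (hZ : ∀ (t : ℝ≥0) (ξ : deficiencySpace V), Z (V t ξ) = rightShift t (expVec ξ))
    {B : G →L[ℂ] G} (hB : ∀ t, V t ∘L B = B ∘L V t)
    (hmem : ∀ ξ ∈ deficiencySpace V, B ξ ∈ deficiencySpace V) (x : G) :
    Z (B x) = (B.restrict hmem).compLpL 2 rplus (Z x) :=
  eqOn_of_dense_shiftPart hdense (A := (Z : G →L[ℂ] Lp (deficiencySpace V) 2 rplus) ∘L B)
    (B := (B.restrict hmem).compLpL 2 rplus ∘L (Z : G →L[ℂ] Lp (deficiencySpace V) 2 rplus))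
    (fun s ξ => by
      have hcomm : B (V s ξ) = V s (B.restrict hmem ξ) := (DFunLike.congr_fun (hB s) (ξ : G)).symm
      simp [hcomm, hZ, compLpL_rightShift, compLpL_expVec, -coe_restrict_apply]) x

end Model

/-- A completely nonunitary C₀-semigroup of isometries commuting with a unitary
C₀-semigroup is jointly unitarily equivalent to `(S^F ⊗ I, I ⊗ U)` on `L²(ℝ₊, F)`. -/
theorem cnu_commuting_with_unitary_model {H : Type} [NormedAddCommGroup H]
    [InnerProductSpace ℂ H] [CompleteSpace H] (V1 V2 : ℝ≥0 → H →L[ℂ] H)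
    (h1 : IsIsometrySemigroup V1) (hcnu : IsCnu V1)
    (h2 : IsUnitarySemigroup V2) (hc : SgCommute V1 V2) :
    ∃ (F : Type) (_ : NormedAddCommGroup F) (_ : InnerProductSpace ℂ F) (_ : CompleteSpace F)
      (U : ℝ≥0 → F →L[ℂ] F) (Z : H ≃ₗᵢ[ℂ] Lp F 2 rplus),
      IsUnitarySemigroup U ∧
      ∀ (t : ℝ≥0) (x : H),
        ((Z (V1 t x) : ℝ → F) =ᵐ[rplus]
          fun y => if (t : ℝ) ≤ y then (Z x : ℝ → F) (y - (t : ℝ)) else 0) ∧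
        ((Z (V2 t x) : ℝ → F) =ᵐ[rplus] fun y => U t ((Z x : ℝ → F) y)) := by
  have hdense := h1.dense_shiftPart hcnu
  have hreduces := (hc.sgDoublyCommute h2).reducedBy_deficiencySpace
  obtain ⟨Z, hZ⟩ := h1.exists_linearIsometryEquiv_rightShift hdense
  refine ⟨deficiencySpace V1, inferInstance, inferInstance, inferInstance,
    fun t => (V2 t).restrict (hreduces.1 t), Z, h2.restrict hreduces, fun t x => ⟨?_, ?_⟩⟩
  · rw [h1.1.model_apply_eq_rightShift hdense hZ]
    exact isRightShiftOp_rightShift t (Z x)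
  · rw [model_apply_eq_compLpL hdense hZ (fun s => hc s t) (hreduces.1 t)]
    exact coeFn_compLpL _ (Z x)
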